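/- Let d ≥ 2 be an integer. Let (M_n(1),…,M_n(m)) be the occupancy counts of the uniform occupancy model with n balls and m urns, let q = 1 − 1/(m−1), and for i ≠ j define c_{n,m}(i,j) = (1 − q^{|M_n(i)−d|}) · 1{M_n(j) = d}. Then there exist an integer n₁, a real r₁ > 0, and a constant C, all depending only on d, such that for all n ≥ n₁ and all m ≥ 2 with r_{n,m} ≥ r₁, Var(Σ_{1 ≤ i,j ≤ m, i≠j} c_{n,m}(i,j)) ≤ C·n·[1 + (n/m)²]. -/

import Mathlib

open MeasureTheory ProbabilityTheory

/-- The uniform occupancy model: `n` balls are placed independently and uniformly at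
random into `m` urns. -/
noncomputable def occ (n m : ℕ) : Measure (Fin n → Fin m) :=
  (Fintype.card (Fin n → Fin m) : ENNReal)⁻¹ • Measure.count

/-- The number of balls in urn `i`. -/
def ballCount {n m : ℕ} (ω : Fin n → Fin m) (i : Fin m) : ℕ :=
  (Finset.univ.filter fun b => ω b = i).card

/-- The number of urns containing exactly `d` balls. -/
def urnCount (d : ℕ) {n m : ℕ} (ω : Fin n → Fin m) : ℕ :=
  (Finset.univ.filter fun i => ballCount ω i = d).card

/-- `μ_{n,m}`, the mean number of urns containing exactly `d` balls. -/
noncomputable def occMean (d n m : ℕ) : ℝ :=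
  ∫ ω, (urnCount d ω : ℝ) ∂(occ n m)


/-- `σ²_{n,m}`, the variance of the number of urns containing exactly `d` balls. -/
noncomputable def occVar (d n m : ℕ) : ℝ :=
  variance (fun ω => (urnCount d ω : ℝ)) (occ n m)

/-- `r_{n,m} = σ_{n,m} / (1 + (n/m)³)`. -/
noncomputable def occR (d n m : ℕ) : ℝ :=
  Real.sqrt (occVar d n m) / (1 + ((n : ℝ) / m) ^ 3)

/-- The summand `c_{n,m}(i,j)` of Lemma 3.3, Equation (3.16), with `q = 1 − 1/(m−1)`. -/
noncomputable def cTerm (d n m : ℕ) (ω : Fin n → Fin m) (i j : Fin m) : ℝ :=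
  if ballCount ω j = d then
    1 - (1 - 1 / ((m : ℝ) - 1)) ^ ((ballCount ω i : ℤ) - (d : ℤ)).natAbs
  else 0

/-- The variance of finitely many numbers at mutual distance at most `c` is at most `c ^ 2`. -/
lemma sum_sq_div_sub_sq_le {m : ℕ} (hm : 0 < m) (a : Fin m → ℝ) {c : ℝ}
    (ha : ∀ x y, |a x - a y| ≤ c) :
    (∑ x, a x ^ 2) / m - ((∑ x, a x) / m) ^ 2 ≤ c ^ 2 := by
  have hm' : (0 : ℝ) < m := by exact_mod_cast hm
  set z := a ⟨0, hm⟩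
  have h : ∑ x, (a x - z) ^ 2 ≤ m * c ^ 2 := by
    calc ∑ x, (a x - z) ^ 2 ≤ ∑ _x : Fin m, c ^ 2 :=
          Finset.sum_le_sum fun x _ => sq_le_sq' (abs_le.1 (ha x _)).1 (abs_le.1 (ha x _)).2
      _ = m * c ^ 2 := by simp
  have e : ∑ x, (a x - z) ^ 2 = ∑ x, a x ^ 2 - 2 * z * ∑ x, a x + m * z ^ 2 := by
    simp only [sub_sq, Finset.sum_add_distrib, Finset.sum_sub_distrib, Finset.mul_sum]
    simp only [Finset.sum_const, Finset.card_univ, Fintype.card_fin, nsmul_eq_mul]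
    congr 2
    exact Finset.sum_congr rfl fun x _ => by ring
  have h2 : (∑ x, (a x - z) ^ 2) / m ≤ c ^ 2 := by
    rw [div_le_iff₀ hm']; linarith
  have e2 : (∑ x, (a x - z) ^ 2) / m
      = (∑ x, a x ^ 2) / m - 2 * z * ((∑ x, a x) / m) + z ^ 2 := by
    rw [e]; field_simp
  nlinarith [sq_nonneg ((∑ x, a x) / m - z)]

/-- Bounded differences form of the Efron–Stein inequality for the uniform distribution on
`Fin n → Fin m`, in terms of finite averages. -/
lemma average_sq_sub_sq_average_le {m : ℕ} (hm : 0 < m) {c : ℝ} (n : ℕ)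
    (f : (Fin n → Fin m) → ℝ)
    (hf : ∀ ω b x y, |f (Function.update ω b x) - f (Function.update ω b y)| ≤ c) :
    (∑ ω, f ω ^ 2) / (m : ℝ) ^ n - ((∑ ω, f ω) / (m : ℝ) ^ n) ^ 2 ≤ n * c ^ 2 := by
  have hm' : (0 : ℝ) < m := by exact_mod_cast hm
  induction n with
  | zero => simp
  | succ n ih =>
    have split (F : (Fin (n + 1) → Fin m) → ℝ) :
        ∑ ω, F ω = ∑ ω : Fin n → Fin m, ∑ x, F (Fin.cons x ω) := by
      rw [← (Fin.consEquiv fun _ : Fin (n + 1) => Fin m).sum_comp, Fintype.sum_prod_type,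
        Finset.sum_comm]
      rfl
    set g : (Fin n → Fin m) → ℝ := fun ω => (∑ x, f (Fin.cons x ω)) / m with hg
    have hgc : ∀ ω b x y, |g (Function.update ω b x) - g (Function.update ω b y)| ≤ c := by
      intro ω b x y
      simp only [hg, ← sub_div, ← Finset.sum_sub_distrib, abs_div, Nat.abs_cast]
      rw [div_le_iff₀ hm']
      calc _ ≤ ∑ z, |f (Fin.cons z (Function.update ω b x))
              - f (Fin.cons z (Function.update ω b y))| := Finset.abs_sum_le_sum_abs _ _
        _ ≤ ∑ _z : Fin m, c := by
            refine Finset.sum_le_sum fun z _ => ?_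
            rw [Fin.cons_update, Fin.cons_update]
            exact hf _ _ _ _
        _ = c * m := by simp [mul_comm]
    have hfib (ω : Fin n → Fin m) :
        (∑ x, f (Fin.cons x ω) ^ 2) / m - g ω ^ 2 ≤ c ^ 2 := by
      refine sum_sq_div_sub_sq_le hm _ fun x y => ?_
      have := hf (Fin.cons x ω) 0 x y
      rwa [Fin.update_cons_zero, Fin.update_cons_zero] at this
    have hsum := Finset.sum_le_sum fun ω (_ : ω ∈ Finset.univ) => hfib ω
    have hN : (0 : ℝ) < (m : ℝ) ^ n := by positivity
    rw [Finset.sum_sub_distrib, ← Finset.sum_div, ← split fun ω => f ω ^ 2] at hsum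
    simp only [Finset.sum_const, Finset.card_univ, Fintype.card_fun, Fintype.card_fin,
      nsmul_eq_mul, Nat.cast_pow] at hsum
    have h1 : (∑ ω, f ω ^ 2) / (m : ℝ) ^ (n + 1) - (∑ ω, g ω ^ 2) / (m : ℝ) ^ n ≤ c ^ 2 := by
      rw [pow_succ', ← div_div, ← sub_div, div_le_iff₀ hN]
      linarith
    have h2 : (∑ ω, g ω) / (m : ℝ) ^ n = (∑ ω, f ω) / (m : ℝ) ^ (n + 1) := by
      rw [split f, hg, ← Finset.sum_div, pow_succ', div_div]
    have h3 := ih g hgc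
    rw [h2] at h3
    push_cast
    linarith

lemma isProbabilityMeasure_occ {n m : ℕ} (hm : 0 < m) : IsProbabilityMeasure (occ n m) := by
  have : NeZero m := ⟨hm.ne'⟩
  refine ⟨?_⟩
  rw [occ, Measure.smul_apply, Measure.count_univ, ENat.card_eq_coe_fintype_card, smul_eq_mul]
  refine ENNReal.inv_mul_cancel ?_ ?_
  · exact_mod_cast Fintype.card_ne_zero
  · exact ENNReal.natCast_ne_top _

lemma integral_occ {n m : ℕ} (f : (Fin n → Fin m) → ℝ) :
    ∫ ω, f ω ∂(occ n m) = (∑ ω, f ω) / (m : ℝ) ^ n := by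
  rw [occ, integral_smul_measure, integral_count]
  simp [div_eq_inv_mul]

/-- The variance of a function of the `n` balls which changes by at most `c` when a single ball
is moved is at most `n * c ^ 2`. -/
lemma variance_occ_le {n m : ℕ} (hm : 0 < m) (f : (Fin n → Fin m) → ℝ) {c : ℝ}
    (hf : ∀ ω b x y, |f (Function.update ω b x) - f (Function.update ω b y)| ≤ c) :
    variance f (occ n m) ≤ n * c ^ 2 := by
  have := isProbabilityMeasure_occ (n := n) hm
  rw [variance_eq_sub MemLp.of_discrete, integral_occ, integral_occ]
  exact average_sq_sub_sq_average_le hm n f hf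

lemma ballCount_eq_sum {n m : ℕ} (ω : Fin n → Fin m) (i : Fin m) :
    (ballCount ω i : ℝ) = ∑ b, if ω b = i then 1 else 0 := by
  simp [ballCount]

lemma sum_ballCount {n m : ℕ} (ω : Fin n → Fin m) : ∑ i, (ballCount ω i : ℝ) = n := by
  simp only [ballCount_eq_sum]
  rw [Finset.sum_comm]
  simp

/-- A sum over the urns of an `L`-Lipschitz function of the counts changes by at most `2 * L`
when one ball is moved. -/
lemma abs_sum_ballCount_update_sub_le {n m : ℕ} {L : ℝ} (hL : 0 ≤ L) (φ : ℕ → ℝ)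
    (hφ : ∀ k l : ℕ, |φ k - φ l| ≤ L * |(k : ℝ) - l|) (ω : Fin n → Fin m) (b : Fin n)
    (x y : Fin m) :
    |∑ i, φ (ballCount (Function.update ω b x) i)
      - ∑ i, φ (ballCount (Function.update ω b y) i)| ≤ 2 * L := by
  have hM (i : Fin m) : |(ballCount (Function.update ω b x) i : ℝ)
      - ballCount (Function.update ω b y) i|
        ≤ (if x = i then 1 else 0) + if y = i then 1 else 0 := by
    rw [ballCount_eq_sum, ballCount_eq_sum, ← Finset.sum_sub_distrib,
      Finset.sum_eq_single b]
    · simp only [Function.update_self]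
      split_ifs <;> norm_num
    · intro b' _ hb
      simp [Function.update_of_ne hb]
    · simp
  rw [← Finset.sum_sub_distrib]
  calc _ ≤ ∑ i, |φ (ballCount (Function.update ω b x) i)
          - φ (ballCount (Function.update ω b y) i)| := Finset.abs_sum_le_sum_abs _ _
    _ ≤ ∑ i, L * ((if x = i then 1 else 0) + if y = i then 1 else 0) :=
        Finset.sum_le_sum fun i _ =>
          (hφ _ _).trans (mul_le_mul_of_nonneg_left (hM i) hL)
    _ = 2 * L := by
        rw [← Finset.mul_sum, Finset.sum_add_distrib]
        simp
        ring

lemma abs_pow_sub_pow_le_one_sub_mul {q : ℝ} (h0 : 0 ≤ q) (h1 : q ≤ 1) (k l : ℕ) :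
    |q ^ k - q ^ l| ≤ (1 - q) * |(k : ℝ) - l| := by
  wlog h : l ≤ k generalizing k l
  · rw [abs_sub_comm, abs_sub_comm (k : ℝ)]
    exact this l k (by omega)
  obtain ⟨j, rfl⟩ := Nat.exists_eq_add_of_le h
  have hb : 1 - q ^ j ≤ (1 - q) * j := by
    have := one_add_mul_le_pow (a := q - 1) (by linarith) j
    rw [add_sub_cancel] at this
    linarith
  have hj : 0 ≤ 1 - q ^ j := sub_nonneg.2 (pow_le_one₀ h0 h1)
  have e : |q ^ (l + j) - q ^ l| = q ^ l * (1 - q ^ j) := by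
    rw [abs_sub_comm, abs_of_nonneg] <;> rw [show q ^ l - q ^ (l + j) = q ^ l * (1 - q ^ j) by ring]
    positivity
  rw [e]
  push_cast
  rw [add_sub_cancel_left, Nat.abs_cast]
  exact (mul_le_of_le_one_left hj (pow_le_one₀ h0 h1)).trans hb

lemma abs_pow_natAbs_sub_le {q : ℝ} (h0 : 0 ≤ q) (h1 : q ≤ 1) (d k l : ℕ) :
    |(1 - q ^ ((k : ℤ) - d).natAbs) - (1 - q ^ ((l : ℤ) - d).natAbs)|
      ≤ (1 - q) * |(k : ℝ) - l| := by
  rw [sub_sub_sub_cancel_left, abs_sub_comm]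
  refine (abs_pow_sub_pow_le_one_sub_mul h0 h1 _ _).trans
    (mul_le_mul_of_nonneg_left ?_ (sub_nonneg.2 h1))
  simp only [Nat.cast_natAbs, Int.cast_abs, Int.cast_sub, Int.cast_natCast]
  refine (abs_abs_sub_abs_le _ _).trans ?_
  rw [sub_sub_sub_cancel_right]

lemma abs_ite_eq_sub_ite_eq_le (d k l : ℕ) :
    |(if k = d then (1 : ℝ) else 0) - if l = d then 1 else 0| ≤ 1 * |(k : ℝ) - l| := by
  rw [one_mul]
  rcases eq_or_ne k l with rfl | hkl
  · simp
  · have h : (1 : ℝ) ≤ |(k : ℝ) - l| := by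
      have : (1 : ℤ) ≤ |(k : ℤ) - l| := Int.one_le_abs (by omega)
      exact_mod_cast this
    refine le_trans ?_ h
    split_ifs <;> norm_num

/-- The condition `i ≠ j` is automatic in the sum of the `cTerm`s, which is therefore a product. -/
lemma sum_cTerm_eq_mul (d n m : ℕ) (ω : Fin n → Fin m) :
    (∑ i : Fin m, ∑ j : Fin m, if i ≠ j then cTerm d n m ω i j else 0)
      = (∑ i, (1 - (1 - 1 / ((m : ℝ) - 1)) ^ ((ballCount ω i : ℤ) - (d : ℤ)).natAbs))
        * ∑ j, if ballCount ω j = d then 1 else 0 := by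
  rw [Finset.sum_mul_sum]
  refine Finset.sum_congr rfl fun i _ => Finset.sum_congr rfl fun j _ => ?_
  rw [mul_ite, mul_one, mul_zero]
  by_cases h : i = j
  · subst h
    by_cases hd : ballCount ω i = d <;> simp [hd]
  · simp [h, cTerm]

/-- Lemma 3.3, bound (3.16): `Var(Σ_{i≠j} c_{n,m}(i,j)) ≤ C·n·[1 + (n/m)²]`. -/
theorem variance_cTerm_sum_le (d : ℕ) (hd : 2 ≤ d) :
    ∃ (n₁ : ℕ) (r₁ C : ℝ), 0 < r₁ ∧ 0 < C ∧
      ∀ n m : ℕ, n₁ ≤ n → 2 ≤ m → r₁ ≤ occR d n m →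
        variance (fun ω : Fin n → Fin m =>
            ∑ i : Fin m, ∑ j : Fin m, if i ≠ j then cTerm d n m ω i j else 0)
          (occ n m)
        ≤ C * n * (1 + ((n : ℝ) / m) ^ 2) := by
  refine ⟨0, 1, 32 * (d + 1) ^ 2, one_pos, by positivity, fun n m _ hm _ => ?_⟩
  have hm2 : (2 : ℝ) ≤ m := by exact_mod_cast hm
  have hm1 : (0 : ℝ) < m - 1 := by linarith
  set q : ℝ := 1 - 1 / ((m : ℝ) - 1) with hq
  have hq' : 1 - q = 1 / ((m : ℝ) - 1) := by rw [hq]; ring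
  have hq1 : q ≤ 1 := sub_nonneg.1 (by rw [hq']; positivity)
  have hq0 : 0 ≤ q := sub_nonneg.2 ((div_le_one hm1).2 (by linarith))
  have hqm : (1 - q) * m ≤ 2 := by
    rw [hq', one_div, inv_mul_le_iff₀ hm1]; linarith
  set t : ℝ := (n : ℝ) / m with ht
  have ht0 : 0 ≤ t := by positivity
  have htm : (n : ℝ) = t * m := by rw [ht]; field_simp
  set A : (Fin n → Fin m) → ℝ := fun ω =>
    ∑ i, (1 - q ^ ((ballCount ω i : ℤ) - (d : ℤ)).natAbs)
  set Y : (Fin n → Fin m) → ℝ := fun ω => ∑ j, if ballCount ω j = d then 1 else 0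
  have hAabs (ω : Fin n → Fin m) : |A ω| ≤ 2 * (t + d) := by
    calc |A ω| ≤ ∑ i, |1 - q ^ ((ballCount ω i : ℤ) - (d : ℤ)).natAbs| :=
          Finset.abs_sum_le_sum_abs _ _
      _ ≤ ∑ i, (1 - q) * ((ballCount ω i : ℝ) + d) := by
          refine Finset.sum_le_sum fun i _ => ?_
          have h := abs_pow_natAbs_sub_le hq0 hq1 d (ballCount ω i) d
          rw [sub_self, Int.natAbs_zero, pow_zero, sub_self, sub_zero] at h
          refine h.trans (mul_le_mul_of_nonneg_left ?_ (sub_nonneg.2 hq1))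
          exact (abs_sub _ _).trans_eq (by simp)
      _ = (1 - q) * m * (t + d) := by
          rw [← Finset.mul_sum, Finset.sum_add_distrib, sum_ballCount, htm]
          simp
          ring
      _ ≤ 2 * (t + d) := mul_le_mul_of_nonneg_right hqm (by positivity)
  have hYabs (ω : Fin n → Fin m) : |Y ω| ≤ m := by
    calc |Y ω| ≤ ∑ j, |if ballCount ω j = d then (1 : ℝ) else 0| :=
          Finset.abs_sum_le_sum_abs _ _
      _ ≤ ∑ _j : Fin m, 1 := Finset.sum_le_sum fun j _ => by split_ifs <;> simp
      _ = m := by simp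
  have hmain : variance (fun ω => A ω * Y ω) (occ n m) ≤ n * (4 * (t + d) + 4) ^ 2 := by
    refine variance_occ_le (by omega) _ fun ω b x y => ?_
    have hdA : |A (Function.update ω b x) - A (Function.update ω b y)| ≤ 2 * (1 - q) :=
      abs_sum_ballCount_update_sub_le (sub_nonneg.2 hq1)
        (fun k => 1 - q ^ ((k : ℤ) - (d : ℤ)).natAbs) (abs_pow_natAbs_sub_le hq0 hq1 d) ω b x y
    have hdY : |Y (Function.update ω b x) - Y (Function.update ω b y)| ≤ 2 * 1 :=
      abs_sum_ballCount_update_sub_le zero_le_one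
        (fun k => if k = d then 1 else 0) (abs_ite_eq_sub_ite_eq_le d) ω b x y
    have e : A (Function.update ω b x) * Y (Function.update ω b x)
        - A (Function.update ω b y) * Y (Function.update ω b y)
        = A (Function.update ω b x) * (Y (Function.update ω b x) - Y (Function.update ω b y))
          + (A (Function.update ω b x) - A (Function.update ω b y))
            * Y (Function.update ω b y) := by ring
    calc _ ≤ 2 * (t + d) * (2 * 1) + 2 * (1 - q) * m := by
          rw [e]
          refine (abs_add_le _ _).trans (add_le_add ?_ ?_) <;> rw [abs_mul]
          · exact mul_le_mul (hAabs _) hdY (abs_nonneg _) (by positivity)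
          · exact mul_le_mul hdA (hYabs _) (abs_nonneg _)
              (mul_nonneg zero_le_two (sub_nonneg.2 hq1))
      _ ≤ 4 * (t + d) + 4 := by linarith
  simp only [sum_cTerm_eq_mul]
  refine hmain.trans ?_
  have hd0 : (0 : ℝ) ≤ d := Nat.cast_nonneg d
  have hfin : (4 * (t + d) + 4) ^ 2 ≤ 32 * ((d : ℝ) + 1) ^ 2 * (1 + t ^ 2) := by
    have h1 : t ^ 2 ≤ ((d : ℝ) + 1) ^ 2 * t ^ 2 :=
      le_mul_of_one_le_left (sq_nonneg t) (by nlinarith)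
    nlinarith [sq_nonneg (t - (d + 1))]
  calc (n : ℝ) * (4 * (t + d) + 4) ^ 2 ≤ n * (32 * ((d : ℝ) + 1) ^ 2 * (1 + t ^ 2)) :=
        mul_le_mul_of_nonneg_left hfin (Nat.cast_nonneg n)
    _ = 32 * ((d : ℝ) + 1) ^ 2 * n * (1 + t ^ 2) := by ring
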